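/- arXiv:1807.09145 — 2 statements merged into one kernel-verified Lean document; each statement's English description precedes it below -/
import Mathlib

section
/- The set {(v, a) ∈ ℂ × Circle : a • conj v = v} (the set of rotations of the Euclidean plane around centers lying on a fixed line, together with the translations in the orthogonal direction, i.e. rotations with infinite center), equipped with the subspace topology of ℂ × Circle, is homeomorphic to the open Möbius strip. -/
/-!
If `u` is a square root of `a ∈ Circle`, the equation `a • conj v = v` says that `u⁻¹ • v` is real.
Hence `(u, y) ↦ (u • y, u * u)` maps the cylinder `Circle × ℝ` onto the fixed-point set, and since
`u` is determined by `a` up to sign, its fibres are the orbits of `(u, y) ↦ (-u, -y)`. It is proper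
because the circle is compact, so it is a quotient map. Unrolling the cylinder by `u = e^{iπx}`
turns the antipodal identification into `(x, y) ∼ (x + 1, -y)`.
-/

/-- The generating relation of the Möbius strip: `(x, y) ∼ (x + 1, -y)`. -/
def mobiusRel (p q : ℝ × ℝ) : Prop := q = (p.1 + 1, -p.2)

/-- The open Möbius strip: the quotient of `ℝ × ℝ` by the equivalence relation generated
by `(x, y) ∼ (x + 1, -y)`, with the quotient topology. -/
def MobiusStrip : Type := Quot mobiusRel

instance : TopologicalSpace MobiusStrip :=
  inferInstanceAs (TopologicalSpace (Quot mobiusRel))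

open Topology ComplexConjugate Real

section General

variable {G X Y : Type*} [TopologicalSpace G] [TopologicalSpace X] [TopologicalSpace Y]

lemma isHomeomorph_quot_lift {r : X → X → Prop} {f : X → Y} (hf : IsQuotientMap f)
    (hr : ∀ a b, r a b → f a = f b) (hr' : ∀ a b, f a = f b → Quot.mk r a = Quot.mk r b) :
    IsHomeomorph (Quot.lift f hr) := by
  have hquot : IsQuotientMap (Quot.lift f hr) :=
    .of_comp continuous_quot_mk (continuous_quot_lift hr hf.continuous) hf
  refine isHomeomorph_iff_isQuotientMap_injective.2 ⟨hquot, ?_⟩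
  rintro ⟨a⟩ ⟨b⟩ h
  exact hr' a b h

lemma isProperMap_smul_prodMk [Group G] [ContinuousInv G] [MulAction G X] [ContinuousSMul G X]
    [CompactSpace G] [T2Space Y] {f : G → Y} (hf : Continuous f) :
    IsProperMap fun p : G × X => (p.1 • p.2, f p.1) := by
  let shear : G × X ≃ₜ G × X :=
    { toFun := fun p => (p.1, p.1 • p.2)
      invFun := fun p => (p.1, p.1⁻¹ • p.2)
      left_inv := fun p => by simp
      right_inv := fun p => by simp
      continuous_toFun := by fun_prop
      continuous_invFun := by fun_prop }
  exact (Homeomorph.prodComm Y X).isProperMap.comp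
    ((hf.isProperMap.prodMap isProperMap_id).comp shear.isProperMap)

end General

section Circle

lemma antiperiodic_circleExp : Function.Antiperiodic Circle.exp π := fun x => by
  ext
  simp [Circle.coe_exp]

lemma isOpenQuotientMap_circleExp_mul {c : ℝ} (hc : c ≠ 0) :
    IsOpenQuotientMap fun x : ℝ => Circle.exp (c * x) :=
  Circle.isAddQuotientCoveringMap_exp.isOpenQuotientMap.comp
    (Homeomorph.mulLeft₀ c hc).isOpenQuotientMap

lemma exists_circle_mul_self_eq (a : Circle) : ∃ u : Circle, u * u = a := by
  obtain ⟨t, rfl⟩ := Circle.exp_surjective a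
  exact ⟨Circle.exp (t / 2), by rw [← Circle.exp_add, add_halves]⟩

lemma circle_mul_self_eq_mul_self_iff {u w : Circle} : u * u = w * w ↔ u = w ∨ u = -w := by
  simpa only [← Circle.coe_inj, Circle.coe_mul, Circle.coe_neg] using
    mul_self_eq_mul_self_iff (a := (u : ℂ)) (b := w)

lemma conj_circle_smul (u : Circle) (v : ℂ) : conj (u • v) = u⁻¹ • conj v := by
  simp only [Circle.smul_def, smul_eq_mul, map_mul, Circle.coe_inv_eq_conj]

lemma circle_mul_self_smul_conj_eq_iff {u : Circle} {v : ℂ} :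
    (u * u) • conj v = v ↔ ∃ y : ℝ, u • (y : ℂ) = v :=
  calc (u * u) • conj v = v ↔ conj (u⁻¹ • v) = u⁻¹ • v := by
        rw [conj_circle_smul, inv_inv, mul_smul, smul_eq_iff_eq_inv_smul]
    _ ↔ ∃ y : ℝ, u⁻¹ • v = y := Complex.conj_eq_iff_real
    _ ↔ ∃ y : ℝ, u • (y : ℂ) = v := exists_congr fun _ => inv_smul_eq_iff.trans eq_comm

end Circle

/-- The fixed-point set of `(v, a) ↦ (a • conj v, a)` on `SE(2) = ℂ × Circle`, with the subspace
topology. -/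
abbrev SE2FixedPoint : Type := {x : ℂ × Circle // x.2 • conj x.1 = x.1}

/-- The parametrization of the fixed-point set by the cylinder, which sends `(u, y)` to the point
`u • y` of the real line over `u * u`. -/
noncomputable def cylinderParam (p : Circle × ℝ) : SE2FixedPoint :=
  ⟨(p.1 • (p.2 : ℂ), p.1 * p.1), circle_mul_self_smul_conj_eq_iff.2 ⟨p.2, rfl⟩⟩

lemma cylinderParam_surjective : Function.Surjective cylinderParam := by
  rintro ⟨⟨v, a⟩, h⟩
  obtain ⟨u, rfl⟩ := exists_circle_mul_self_eq a
  obtain ⟨y, rfl⟩ := circle_mul_self_smul_conj_eq_iff.1 h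
  exact ⟨(u, y), rfl⟩

lemma isProperMap_cylinderParam : IsProperMap cylinderParam := by
  have hproper : IsProperMap fun p : Circle × ℝ => (p.1 • (p.2 : ℂ), p.1 * p.1) :=
    (isProperMap_smul_prodMk (f := fun u : Circle => u * u) (by fun_prop)).comp
      (isProperMap_id.prodMap Complex.isometry_ofReal.isClosedEmbedding.isProperMap)
  exact isProperMap_of_comp_of_inj (hproper.continuous.subtype_mk _) continuous_subtype_val
    hproper Subtype.val_injective

lemma isQuotientMap_cylinderParam : IsQuotientMap cylinderParam :=
  isProperMap_cylinderParam.isClosedMap.isQuotientMap isProperMap_cylinderParam.continuous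
    cylinderParam_surjective

lemma cylinderParam_neg (p : Circle × ℝ) : cylinderParam (-p) = cylinderParam p :=
  Subtype.ext (Prod.ext (by simp [cylinderParam, Circle.smul_def]) (neg_mul_neg p.1 p.1))

lemma cylinderParam_eq_iff {p q : Circle × ℝ} :
    cylinderParam p = cylinderParam q ↔ p = q ∨ p = -q := by
  have eq_of_fst_eq {p q : Circle × ℝ} (h : cylinderParam p = cylinderParam q)
      (hfst : p.1 = q.1) : p = q := by
    have hsmul : p.1 • (p.2 : ℂ) = q.1 • (q.2 : ℂ) := congrArg (fun z => z.1.1) h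
    rw [hfst, smul_left_cancel_iff, Complex.ofReal_inj] at hsmul
    exact Prod.ext hfst hsmul
  constructor
  · intro h
    have hsq : p.1 * p.1 = q.1 * q.1 := congrArg (fun z => z.1.2) h
    refine (circle_mul_self_eq_mul_self_iff.1 hsq).imp (eq_of_fst_eq h) ?_
    exact eq_of_fst_eq (h.trans (cylinderParam_neg q).symm)
  · rintro (rfl | rfl)
    exacts [rfl, cylinderParam_neg q]

/-- The unrolling of the cylinder by the plane. The angle is `π * x` rather than `2 * π * x`, so
that the unit shift of `x` becomes the antipodal map of the circle. -/
noncomputable def cylinderUnroll (p : ℝ × ℝ) : Circle × ℝ := (Circle.exp (π * p.1), p.2)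

lemma isOpenQuotientMap_cylinderUnroll : IsOpenQuotientMap cylinderUnroll :=
  (isOpenQuotientMap_circleExp_mul pi_ne_zero).prodMap .id

lemma cylinderUnroll_add_one_neg (x y : ℝ) :
    cylinderUnroll (x + 1, -y) = -cylinderUnroll (x, y) := by
  simp [cylinderUnroll, mul_add, antiperiodic_circleExp (π * x)]

lemma quot_mk_mobiusRel_add_one_neg (x y : ℝ) :
    Quot.mk mobiusRel (x + 1, -y) = Quot.mk mobiusRel (x, y) :=
  (Quot.sound (show mobiusRel (x, y) (x + 1, -y) from rfl)).symm

lemma periodic_quot_mk_mobiusRel (y : ℝ) :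
    Function.Periodic (fun x => Quot.mk mobiusRel (x, y)) 2 := fun x =>
  calc Quot.mk mobiusRel (x + 2, y) = Quot.mk mobiusRel (x + 1 + 1, - -y) := by
        rw [neg_neg, add_assoc, one_add_one_eq_two]
    _ = Quot.mk mobiusRel (x, y) := by
        rw [quot_mk_mobiusRel_add_one_neg, quot_mk_mobiusRel_add_one_neg]

lemma quot_mk_mobiusRel_eq_of_cylinderUnroll_eq {p q : ℝ × ℝ}
    (h : cylinderUnroll p = cylinderUnroll q) : Quot.mk mobiusRel p = Quot.mk mobiusRel q := by
  obtain ⟨x, y⟩ := p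
  obtain ⟨x', y'⟩ := q
  obtain ⟨hexp, rfl⟩ := Prod.mk.inj h
  obtain ⟨m, hm⟩ := Circle.exp_eq_exp.1 hexp
  have hx : x = x' + m * 2 := mul_left_cancel₀ pi_ne_zero (by linear_combination hm)
  rw [hx]
  exact (periodic_quot_mk_mobiusRel y).int_mul m x'

/-- The parametrization `(x, y) ↦ (e^{iπx} y, e^{2πix})` of the fixed-point set by the plane. -/
noncomputable def mobiusParam (p : ℝ × ℝ) : SE2FixedPoint := cylinderParam (cylinderUnroll p)

lemma isQuotientMap_mobiusParam : IsQuotientMap mobiusParam :=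
  isQuotientMap_cylinderParam.comp isOpenQuotientMap_cylinderUnroll.isQuotientMap

lemma mobiusParam_eq_of_mobiusRel (p q : ℝ × ℝ) (h : mobiusRel p q) :
    mobiusParam p = mobiusParam q := by
  subst h
  rw [mobiusParam, mobiusParam, cylinderUnroll_add_one_neg, cylinderParam_neg]

lemma quot_mk_mobiusRel_eq_of_mobiusParam_eq (p q : ℝ × ℝ) (h : mobiusParam p = mobiusParam q) :
    Quot.mk mobiusRel p = Quot.mk mobiusRel q := by
  rcases cylinderParam_eq_iff.1 h with h | h
  · exact quot_mk_mobiusRel_eq_of_cylinderUnroll_eq h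
  · rw [← cylinderUnroll_add_one_neg] at h
    exact (quot_mk_mobiusRel_eq_of_cylinderUnroll_eq h).trans
      (quot_mk_mobiusRel_add_one_neg q.1 q.2)

/-- The set of fixed points `{(v, a) : a • conj v = v}` of the
anti-automorphism `T (v, a) = (a • conj v, a)` of `SE(2) = ℂ × Circle` (the rotations
around centers on a fixed line together with the orthogonal translations), with the
subspace topology, is homeomorphic to the open Möbius strip. -/
theorem se2_fixed_point_set_homeomorphic_mobius :
    Nonempty ({x : ℂ × Circle // x.2 • (starRingEnd ℂ) x.1 = x.1} ≃ₜ MobiusStrip) := by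
  have hlift : IsHomeomorph (Quot.lift mobiusParam mobiusParam_eq_of_mobiusRel) :=
    isHomeomorph_quot_lift isQuotientMap_mobiusParam mobiusParam_eq_of_mobiusRel
      quot_mk_mobiusRel_eq_of_mobiusParam_eq
  exact ⟨hlift.homeomorph.symm⟩
end

section
/- For every point q of the real projective plane ℝP², the complement ℝP² \ {q}, with the subspace topology, is homeomorphic to the open Möbius strip. -/
/-- The real projective plane `ℝP²`, the projectivization of `ℝ³` with the quotient
topology induced from `ℝ³ \ {0}`. -/
abbrev RealProjectivePlane : Type := Projectivization ℝ (Fin 3 → ℝ)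

instance : TopologicalSpace RealProjectivePlane :=
  inferInstanceAs (TopologicalSpace (Quotient (projectivizationSetoid ℝ (Fin 3 → ℝ))))

open Metric Topology
open scoped Real LinearAlgebra.Projectivization

noncomputable section

/-- Two quotient spaces of `X` by the same equivalence relation are homeomorphic. -/
def homeomorphOfIsQuotientMap {X Y Z : Type*} [TopologicalSpace X] [TopologicalSpace Y]
    [TopologicalSpace Z] {f : C(X, Y)} {g : C(X, Z)} (hf : IsQuotientMap f) (hg : IsQuotientMap g)
    (h : ∀ a b, f a = f b ↔ g a = g b) : Y ≃ₜ Z :=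
  hf.homeomorph.symm.trans ((Homeomorph.Quotient.congrRight h).trans hg.homeomorph)

/-- The quotient topology on `ℙ K V`. It is only a local instance, because `RealProjectivePlane`
already carries one, which agrees with it definitionally. -/
abbrev projectivizationTopology (K V : Type*) [DivisionRing K] [AddCommGroup V] [Module K V]
    [TopologicalSpace V] : TopologicalSpace (ℙ K V) :=
  inferInstanceAs (TopologicalSpace (Quotient (projectivizationSetoid K V)))

attribute [local instance] projectivizationTopology

section Projectivization

variable {K V W : Type*} [DivisionRing K] [AddCommGroup V] [Module K V] [TopologicalSpace V]
  [AddCommGroup W] [Module K W] [TopologicalSpace W]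

theorem isQuotientMap_projectivization_mk' :
    IsQuotientMap (Projectivization.mk' K : {v : V // v ≠ 0} → ℙ K V) :=
  isQuotientMap_quot_mk

/-- The homeomorphism of projective spaces induced by a continuous linear equivalence. -/
def homeomorphProjectivization (e : V ≃L[K] W) : ℙ K V ≃ₜ ℙ K W :=
  Homeomorph.Quotient.congr
    (e.toHomeomorph.subtype fun v => (map_ne_zero_iff e e.injective).symm)
    fun v w => exists_congr fun a => by
      change a • (w : V) = v ↔ a • e w = e v
      rw [Units.smul_def, Units.smul_def, ← map_smul, e.injective.eq_iff]

theorem homeomorphProjectivization_mk (e : V ≃L[K] W) (v : V) (hv : v ≠ 0) :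
    homeomorphProjectivization e (Projectivization.mk K v hv) =
      Projectivization.mk K (e v) ((map_ne_zero_iff e e.injective).2 hv) :=
  rfl

theorem exists_homeomorph_projectivization_apply_eq {K V : Type*} [Field K] [TopologicalSpace K]
    [IsTopologicalRing K] [AddCommGroup V] [Module K V] [TopologicalSpace V]
    [IsTopologicalAddGroup V] [ContinuousSMul K V] [SeparatingDual K V] (p q : ℙ K V) :
    ∃ e : ℙ K V ≃ₜ ℙ K V, e p = q := by
  induction p with | h v hv =>
  induction q with | h w hw =>
  obtain ⟨A, rfl⟩ := SeparatingDual.exists_continuousLinearEquiv_apply_eq (R := K) hv hw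
  exact ⟨homeomorphProjectivization A, homeomorphProjectivization_mk A v hv⟩

end Projectivization

section ConePoint

variable {K W : Type*} [DivisionRing K] [AddCommGroup W] [Module K W]

variable (K W) in
/-- The point `[0 : 1]` of `ℙ (W × K)`; removing it leaves the lines `[w : t]` with `w ≠ 0`. -/
def conePoint : ℙ K (W × K) :=
  Projectivization.mk K (0, 1) (by simp)

theorem mk_eq_conePoint_iff (v : W × K) (hv : v ≠ 0) :
    Projectivization.mk K v hv = conePoint K W ↔ v.1 = 0 := by
  rw [conePoint, Projectivization.mk_eq_mk_iff']
  constructor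
  · rintro ⟨a, rfl⟩
    simp
  · intro h
    exact ⟨v.2, Prod.ext (by simp [h]) (by simp)⟩

theorem isOpen_compl_conePoint [TopologicalSpace K] [TopologicalSpace W] [T1Space W] :
    IsOpen ({conePoint K W}ᶜ : Set (ℙ K (W × K))) := by
  rw [← isQuotientMap_projectivization_mk'.isOpen_preimage]
  have h : Projectivization.mk' K ⁻¹' ({conePoint K W}ᶜ : Set (ℙ K (W × K))) =
      (fun v : {v : W × K // v ≠ 0} => v.1.1) ⁻¹' {0}ᶜ := by
    ext v
    exact (mk_eq_conePoint_iff v.1 v.2).not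
  rw [h]
  exact isOpen_compl_singleton.preimage (by fun_prop)

end ConePoint

section Cylinder

variable {W : Type*} [NormedAddCommGroup W] [NormedSpace ℝ W]

/-- The line `[u : y]` through the point `(u, y)` of the cylinder over the unit sphere of `W`. -/
def cylinderLine (p : sphere (0 : W) 1 × ℝ) : ({conePoint ℝ W}ᶜ : Set (ℙ ℝ (W × ℝ))) :=
  have h : (p.1 : W) ≠ 0 := ne_zero_of_mem_unit_sphere p.1
  ⟨Projectivization.mk ℝ ((p.1 : W), p.2) fun h0 => h (congrArg Prod.fst h0),
    (mk_eq_conePoint_iff _ _).not.2 h⟩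

theorem continuous_cylinderLine : Continuous (cylinderLine (W := W)) :=
  Continuous.subtype_mk (isQuotientMap_projectivization_mk'.continuous.comp
    (Continuous.subtype_mk (by fun_prop) _)) _

/-- The intersection of the ray through `v` with the cylinder over the unit sphere. -/
def cylinderPoint (v : W × ℝ) (hv : v.1 ≠ 0) : sphere (0 : W) 1 × ℝ :=
  (⟨‖v.1‖⁻¹ • v.1, by simp [norm_smul, hv]⟩, ‖v.1‖⁻¹ * v.2)

theorem coe_cylinderLine_cylinderPoint (v : W × ℝ) (hv : v ≠ 0) (hv1 : v.1 ≠ 0) :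
    (cylinderLine (cylinderPoint v hv1) : ℙ ℝ (W × ℝ)) = Projectivization.mk ℝ v hv :=
  (Projectivization.mk_eq_mk_iff' ℝ _ _ _ _).2 ⟨‖v.1‖⁻¹, rfl⟩

theorem isQuotientMap_cylinderLine : IsQuotientMap (cylinderLine (W := W)) := by
  let s : Set (ℙ ℝ (W × ℝ)) := {conePoint ℝ W}ᶜ
  have fst_ne_zero (v : Projectivization.mk' ℝ ⁻¹' s) : v.1.1.1 ≠ 0 :=
    (mk_eq_conePoint_iff v.1.1 v.1.2).not.1 v.2
  let normalize (v : Projectivization.mk' ℝ ⁻¹' s) : sphere (0 : W) 1 × ℝ :=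
    cylinderPoint v.1.1 (fst_ne_zero v)
  have continuous_normalize : Continuous normalize := by
    have continuous_norm_inv : Continuous fun v : Projectivization.mk' ℝ ⁻¹' s => ‖v.1.1.1‖⁻¹ :=
      Continuous.inv₀ (by fun_prop) fun v => norm_ne_zero_iff.2 (fst_ne_zero v)
    exact ((continuous_norm_inv.smul (by fun_prop)).subtype_mk _).prodMk
      (continuous_norm_inv.mul (by fun_prop))
  have comp_eq : cylinderLine ∘ normalize = s.restrictPreimage (Projectivization.mk' ℝ) :=
    funext fun v => Subtype.ext (coe_cylinderLine_cylinderPoint v.1.1 v.1.2 (fst_ne_zero v))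
  refine .of_comp continuous_normalize continuous_cylinderLine ?_
  rw [comp_eq]
  exact isQuotientMap_projectivization_mk'.restrictPreimage_isOpen isOpen_compl_conePoint

theorem cylinderLine_eq_iff (p p' : sphere (0 : W) 1 × ℝ) :
    cylinderLine p = cylinderLine p' ↔ p = p' ∨ p = -p' := by
  rw [Subtype.ext_iff]
  refine (Projectivization.mk_eq_mk_iff' ℝ _ _ _ _).trans ⟨?_, ?_⟩
  · rintro ⟨a, ha⟩
    obtain ⟨hfst, hsnd⟩ := Prod.ext_iff.1 ha
    have habs : |a| = 1 := by simpa [norm_smul] using congrArg norm hfst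
    rcases eq_or_eq_neg_of_abs_eq habs with rfl | rfl
    · exact .inl (Prod.ext (Subtype.ext (by simpa using hfst.symm)) (by simpa using hsnd.symm))
    · exact .inr (Prod.ext (Subtype.ext (by simpa using hfst.symm)) (by simpa using hsnd.symm))
  · rintro (rfl | rfl)
    · exact ⟨1, one_smul ℝ _⟩
    · exact ⟨-1, neg_one_smul ℝ _⟩

end Cylinder

section Unrolling

/-- The identity of the unit circle, which is the unit sphere of `ℂ` by definition. -/
def circleHomeomorphSphere : Circle ≃ₜ sphere (0 : ℂ) 1 :=
  Homeomorph.refl Circle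

theorem circleHomeomorphSphere_neg (z : Circle) :
    circleHomeomorphSphere (-z) = -circleHomeomorphSphere z :=
  rfl

/-- The universal covering `(x, y) ↦ (exp (π x I), y)` of the cylinder over the unit circle, scaled
so that the antipodal map lifts to `(x, y) ↦ (x + 1, -y)`. -/
def unroll (p : ℝ × ℝ) : sphere (0 : ℂ) 1 × ℝ :=
  (circleHomeomorphSphere (Circle.exp (π * p.1)), p.2)

theorem isOpenQuotientMap_unroll : IsOpenQuotientMap unroll :=
  have hexp := Circle.isAddQuotientCoveringMap_exp.isOpenQuotientMap
  have hscale := (Homeomorph.mulLeft₀ π Real.pi_ne_zero).isOpenQuotientMap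
  (circleHomeomorphSphere.isOpenQuotientMap.comp (hexp.comp hscale)).prodMap .id

theorem unroll_eq_unroll_iff (p p' : ℝ × ℝ) :
    unroll p = unroll p' ↔ ∃ n : ℤ, p = (p'.1 + n * 2, p'.2) := by
  have hangle (n : ℤ) : π * p.1 = π * p'.1 + n * (2 * π) ↔ p.1 = p'.1 + n * 2 := by
    rw [← mul_right_inj' Real.pi_ne_zero (b := p.1)]
    ring_nf
  simp only [unroll, Prod.ext_iff, circleHomeomorphSphere.injective.eq_iff, Circle.exp_eq_exp,
    hangle, exists_and_right]

theorem circleExp_add_pi (x : ℝ) : Circle.exp (x + π) = -Circle.exp x :=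
  Circle.ext (by simp)

theorem unroll_add_one_neg (x y : ℝ) : unroll (x + 1, -y) = -unroll (x, y) := by
  simp only [unroll, mul_add_one, circleExp_add_pi, circleHomeomorphSphere_neg, Prod.neg_mk]

end Unrolling

namespace MobiusStrip

theorem isQuotientMap_mk : IsQuotientMap (Quot.mk mobiusRel : ℝ × ℝ → MobiusStrip) :=
  isQuotientMap_quot_mk

theorem mk_add_one_neg (x y : ℝ) :
    Quot.mk mobiusRel (x + 1, -y) = Quot.mk mobiusRel (x, y) :=
  .symm (Quot.sound (r := mobiusRel) rfl)

theorem periodic_mk (y : ℝ) : Function.Periodic (fun x => Quot.mk mobiusRel (x, y)) 2 := by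
  intro x
  have h := (mk_add_one_neg (x + 1) (-y)).trans (mk_add_one_neg x y)
  rwa [neg_neg, add_assoc, one_add_one_eq_two] at h

theorem cylinderLine_unroll_eq_iff (p p' : ℝ × ℝ) :
    cylinderLine (unroll p) = cylinderLine (unroll p') ↔
      Quot.mk mobiusRel p = Quot.mk mobiusRel p' := by
  constructor
  · obtain ⟨x', y'⟩ := p'
    rw [cylinderLine_eq_iff, ← unroll_add_one_neg, unroll_eq_unroll_iff, unroll_eq_unroll_iff]
    rintro (⟨n, rfl⟩ | ⟨n, rfl⟩)
    · exact (periodic_mk y').int_mul n x'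
    · exact ((periodic_mk (-y')).int_mul n (x' + 1)).trans (mk_add_one_neg x' y')
  · have respects (a b : ℝ × ℝ) (h : mobiusRel a b) :
        cylinderLine (unroll a) = cylinderLine (unroll b) := by
      obtain rfl : b = (a.1 + 1, -a.2) := h
      exact (cylinderLine_eq_iff _ _).2 (.inr (by simp [unroll_add_one_neg]))
    exact congrArg (Quot.lift _ respects)

end MobiusStrip

/-- The plane `ℝ × ℝ` maps onto both spaces, by `(x, y) ↦ [exp (π x I) : y]` and by the defining
quotient map. -/
def complConePointHomeomorphMobiusStrip :
    ({conePoint ℝ ℂ}ᶜ : Set (ℙ ℝ (ℂ × ℝ))) ≃ₜ MobiusStrip :=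
  have hline := isQuotientMap_cylinderLine.comp isOpenQuotientMap_unroll.isQuotientMap
  homeomorphOfIsQuotientMap (f := ⟨_, hline.continuous⟩)
    (g := ⟨_, MobiusStrip.isQuotientMap_mk.continuous⟩) hline MobiusStrip.isQuotientMap_mk
    MobiusStrip.cylinderLine_unroll_eq_iff

theorem projective_plane_minus_point_homeomorphic_mobius_general {V : Type*} [AddCommGroup V]
    [Module ℝ V] [TopologicalSpace V] [IsTopologicalAddGroup V] [ContinuousSMul ℝ V] [T2Space V]
    (hV : Module.finrank ℝ V = 3) (q : ℙ ℝ V) :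
    Nonempty (({q}ᶜ : Set (ℙ ℝ V)) ≃ₜ MobiusStrip) := by
  have : FiniteDimensional ℝ V := .of_finrank_pos (by lia)
  let coords : V ≃L[ℝ] ℂ × ℝ := .ofFinrankEq (by simp [hV])
  let φ := homeomorphProjectivization coords
  obtain ⟨A, hA⟩ := exists_homeomorph_projectivization_apply_eq (φ q) (conePoint ℝ ℂ)
  let e := φ.trans A
  have he : e q = conePoint ℝ ℂ := hA
  have hcompl (p : ℙ ℝ V) : p ∈ ({q}ᶜ : Set (ℙ ℝ V)) ↔ e p ∈ ({conePoint ℝ ℂ}ᶜ : Set _) := by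
    simp [← he]
  exact ⟨(e.subtype hcompl).trans complConePointHomeomorphMobiusStrip⟩

end

/-- For every point `q` of the real projective plane, the complement
`ℝP² \ {q}` with the subspace topology is homeomorphic to the open Möbius strip. -/
theorem projective_plane_minus_point_homeomorphic_mobius (q : RealProjectivePlane) :
    Nonempty ((({q}ᶜ : Set RealProjectivePlane)) ≃ₜ MobiusStrip) :=
  projective_plane_minus_point_homeomorphic_mobius_general (by simp) q
end
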